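/- arXiv:1710.09454 — 2 statements merged into one kernel-verified Lean document; each statement's English description precedes it below -/
import Mathlib

section
/- Let b, m, m' be natural numbers, let p_0, ..., p_m and q_0, ..., q_{m'} be real numbers, and for each integer k with −b ≤ k ≤ b let a_k : ℝ → ℂ be a smooth function. Define g(x,t) = Σ_{k=−b}^{b} a_k(t) exp(2πi k x) and the polynomial q(z) = Σ_{i=0}^{m'} q_i z^i. If for all x ∈ [0,1] and all t ≥ 0 the field g satisfies the PDE Σ_{i=0}^{m} p_i (∂^i/∂t^i) g(x,t) = Σ_{i=0}^{m'} q_i (∂^i/∂x^i) g(x,t), then for every k with −b ≤ k ≤ b and every t ≥ 0 the Fourier coefficient a_k satisfies the ODE Σ_{i=0}^{m} p_i a_k^{(i)}(t) = q(2πi k) · a_k(t), where a_k^{(i)} denotes the i-th derivative of a_k. -/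
/-!
Differentiating the finite Fourier series termwise, the mode `exp (2πikx)` is an eigenfunction of
`∂ₓ` with eigenvalue `2πik` (`iteratedDeriv_cexp_mul_ofReal`), so at a fixed time `t` the PDE says
that the trigonometric polynomial with coefficients
`∑ i, p i * a_k⁽ⁱ⁾ t - q (2πik) * a_k t` vanishes on `[0, 1]`. By orthogonality of the modes on
`[0, 1]`, all its coefficients vanish (`coeff_eq_zero_of_trigPoly_eq_zero`).
-/

set_option autoImplicit false

open Complex Real

lemma iteratedDeriv_cexp_mul_ofReal (n : ℕ) (c : ℂ) :
    iteratedDeriv n (fun y : ℝ => Complex.exp (c * y)) =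
      fun y : ℝ => c ^ n * Complex.exp (c * y) := by
  induction n with
  | zero => simp
  | succ n ih =>
    rw [iteratedDeriv_succ, ih]
    funext y
    have h : HasDerivAt (fun y : ℝ => c * (y : ℂ)) c y := by
      simpa using (Complex.ofRealCLM.hasDerivAt (x := y)).const_mul c
    rw [(h.cexp.const_mul (c ^ n)).deriv]
    ring

/-- Orthogonality of the Fourier modes on `[0, 1]`. -/
lemma integral_fourier_mode (n : ℤ) :
    ∫ x in (0 : ℝ)..1, Complex.exp (2 * (π : ℂ) * I * n * x) = if n = 0 then 1 else 0 := by
  split_ifs with hn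
  · simp [hn]
  · have hc : 2 * (π : ℂ) * I * n ≠ 0 :=
      mul_ne_zero Complex.two_pi_I_ne_zero (Int.cast_ne_zero.mpr hn)
    have h1 : Complex.exp (2 * (π : ℂ) * I * n) = 1 :=
      Complex.exp_eq_one_iff.mpr ⟨n, by ring⟩
    rw [integral_exp_mul_complex hc]
    simp [h1]

/-- A trigonometric polynomial vanishing on one period has zero coefficients: pairing it with
`exp (-2πilx)` extracts the coefficient of index `l`. -/
lemma coeff_eq_zero_of_trigPoly_eq_zero (s : Finset ℤ) (c : ℤ → ℂ)
    (h : ∀ x ∈ Set.Icc (0 : ℝ) 1, ∑ k ∈ s, c k * Complex.exp (2 * (π : ℂ) * I * k * x) = 0)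
    (l : ℤ) (hl : l ∈ s) : c l = 0 := by
  have h0 : ∫ x in (0 : ℝ)..1,
      ∑ k ∈ s, c k * Complex.exp (2 * (π : ℂ) * I * (k - l : ℤ) * x) = 0 := by
    refine (intervalIntegral.integral_congr (g := fun _ => 0) fun x hx => ?_).trans
      intervalIntegral.integral_zero
    rw [Set.uIcc_of_le zero_le_one] at hx
    have hx0 := congrArg (· * Complex.exp (-(2 * (π : ℂ) * I * l * x))) (h x hx)
    simp only [Finset.sum_mul, zero_mul] at hx0
    refine Eq.trans ?_ hx0
    refine Finset.sum_congr rfl fun k _ => ?_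
    rw [mul_assoc (c k), ← Complex.exp_add]
    push_cast
    ring_nf
  rw [intervalIntegral.integral_finsetSum fun k _ =>
    Continuous.intervalIntegrable (by fun_prop) _ _] at h0
  simp only [intervalIntegral.integral_const_mul, integral_fourier_mode, sub_eq_zero] at h0
  simpa [hl] using h0

/-- If the bandlimited field `g(x,t) = ∑_{k=-b}^{b} a_k(t) e^{2πikx}` satisfies the
constant-coefficient linear PDE `∑_i p_i ∂_t^i g = ∑_i q_i ∂_x^i g` for `x ∈ [0,1]`
and `t ≥ 0`, then each Fourier coefficient satisfies the ODE
`∑_i p_i a_k^{(i)}(t) = q(2πik) a_k(t)` for `t ≥ 0`. -/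
theorem stmt2 (b : ℕ) (m m' : ℕ) (p : ℕ → ℝ) (q : ℕ → ℝ)
    (a : ℤ → ℝ → ℂ) (ha : ∀ k, ContDiff ℝ (⊤ : ℕ∞) (a k))
    (g : ℝ → ℝ → ℂ)
    (hg : ∀ x t, g x t =
      ∑ k ∈ Finset.Icc (-(b : ℤ)) b, a k t * Complex.exp (2 * (π : ℂ) * I * k * x))
    (hPDE : ∀ x ∈ Set.Icc (0 : ℝ) 1, ∀ t : ℝ, 0 ≤ t →
      ∑ i ∈ Finset.range (m + 1), (p i : ℂ) * iteratedDeriv i (fun s => g x s) t =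
      ∑ i ∈ Finset.range (m' + 1), (q i : ℂ) * iteratedDeriv i (fun y => g y t) x) :
    ∀ k ∈ Finset.Icc (-(b : ℤ)) b, ∀ t : ℝ, 0 ≤ t →
      ∑ i ∈ Finset.range (m + 1), (p i : ℂ) * iteratedDeriv i (a k) t =
      (∑ i ∈ Finset.range (m' + 1), (q i : ℂ) * (2 * (π : ℂ) * I * k) ^ i) * a k t := by
  intro k hk t ht
  rw [← sub_eq_zero]
  refine coeff_eq_zero_of_trigPoly_eq_zero (Finset.Icc (-(b : ℤ)) b)
    (fun k => ∑ i ∈ Finset.range (m + 1), (p i : ℂ) * iteratedDeriv i (a k) t -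
      (∑ i ∈ Finset.range (m' + 1), (q i : ℂ) * (2 * (π : ℂ) * I * k) ^ i) * a k t)
    (fun x hx => ?_) k hk
  have ht_deriv (i : ℕ) : iteratedDeriv i (fun s => g x s) t = ∑ k ∈ Finset.Icc (-(b : ℤ)) b,
      iteratedDeriv i (a k) t * Complex.exp (2 * (π : ℂ) * I * k * x) := by
    simp only [hg]
    rw [iteratedDeriv_fun_sum fun k _ =>
      (((ha k).of_le (by exact_mod_cast le_top)).mul contDiff_const).contDiffAt]
    simp only [iteratedDeriv_mul_const_field]
  have hx_deriv (i : ℕ) : iteratedDeriv i (fun y => g y t) x = ∑ k ∈ Finset.Icc (-(b : ℤ)) b,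
      a k t * ((2 * (π : ℂ) * I * k) ^ i * Complex.exp (2 * (π : ℂ) * I * k * x)) := by
    simp only [hg]
    have hmode (k : ℤ) : ContDiff ℝ i
        fun y : ℝ => a k t * Complex.exp (2 * (π : ℂ) * I * k * y) :=
      contDiff_const.mul (contDiff_const.mul Complex.ofRealCLM.contDiff).cexp
    rw [iteratedDeriv_fun_sum fun k _ => (hmode k).contDiffAt]
    simp only [iteratedDeriv_const_mul_field, iteratedDeriv_cexp_mul_ofReal]
  have key := hPDE x hx t ht
  simp only [ht_deriv, hx_deriv, Finset.mul_sum] at key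
  rw [Finset.sum_comm, Finset.sum_comm (s := Finset.range (m' + 1)), ← sub_eq_zero,
    ← Finset.sum_sub_distrib] at key
  rw [← key]
  refine Finset.sum_congr rfl fun k _ => ?_
  simp only [sub_mul, Finset.sum_mul]
  congr 1 <;> exact Finset.sum_congr rfl fun i _ => by ring
end

section
/- Let N ≥ 1 be a natural number and let P be an N×N positive definite Hermitian complex matrix with smallest eigenvalue λ_min > 0 and largest eigenvalue λ_max, and set κ = λ_max / λ_min. Then tr(P) · tr(P⁻¹) ≤ (N²/4) · (κ + 1/κ)². -/
/-!
Diagonalising `P` turns the two traces into `S = ∑ λᵢ` and `T = ∑ λᵢ⁻¹`. For each eigenvalue,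
`(λ - m)(M - λ) ≥ 0` divided by `λ` gives `λ + m M λ⁻¹ ≤ m + M`; summing, `S + m M T ≤ N (m + M)`,
and AM-GM yields Kantorovich's bound `4 m M S T ≤ N² (m + M)²`. With `t = M / m + m / M ≥ 2`
this reads `S T ≤ (N² / 4) (t + 2)`, and `t + 2 ≤ t²`.
-/

set_option autoImplicit false

open scoped ComplexOrder

theorem trace_inv_eq_sum {N : ℕ} {P : Matrix (Fin N) (Fin N) ℂ} (hP : P.PosDef) :
    (P⁻¹).trace = ∑ i, (((hP.1.eigenvalues i)⁻¹ : ℝ) : ℂ) := by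
  set U := hP.1.eigenvectorUnitary
  set D : Matrix (Fin N) (Fin N) ℂ :=
    Matrix.diagonal fun i => (((hP.1.eigenvalues i)⁻¹ : ℝ) : ℂ)
  have hinv : P⁻¹ = Unitary.conjStarAlgAut ℂ _ U D := by
    apply Matrix.inv_eq_right_inv
    -- rewrite only the left factor: the eigenvalues inside `D` also mention `P`
    conv_lhs => enter [1]; rw [hP.1.spectral_theorem]
    rw [← map_mul, Matrix.diagonal_mul_diagonal]
    have h1 : ∀ i, ((hP.1.eigenvalues i : ℝ) : ℂ) * (((hP.1.eigenvalues i)⁻¹ : ℝ) : ℂ) = 1 := by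
      intro i
      rw [← Complex.ofReal_mul, mul_inv_cancel₀ (hP.eigenvalues_pos i).ne', Complex.ofReal_one]
    simp only [Function.comp_apply, Complex.coe_algebraMap, h1]
    simp
  rw [hinv, Unitary.conjStarAlgAut_apply, Matrix.trace_mul_cycle, Unitary.coe_star_mul_self,
    Matrix.one_mul, Matrix.trace_diagonal]

/-- Kantorovich's inequality with equal weights. -/
theorem kantorovich_sum {N : ℕ} (l : Fin N → ℝ) {m M : ℝ} (hm : 0 < m)
    (hl : ∀ i, m ≤ l i) (hu : ∀ i, l i ≤ M) :
    4 * (m * M) * ((∑ i, l i) * ∑ i, (l i)⁻¹) ≤ (N : ℝ) ^ 2 * (m + M) ^ 2 := by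
  rcases Nat.eq_zero_or_pos N with rfl | hN
  · simp
  have hM : 0 < M := hm.trans_le ((hl ⟨0, hN⟩).trans (hu ⟨0, hN⟩))
  have hpos : ∀ i, 0 < l i := fun i => hm.trans_le (hl i)
  have h1 : (∑ i, l i) + m * M * ∑ i, (l i)⁻¹ ≤ N * (m + M) := by
    rw [Finset.mul_sum, ← Finset.sum_add_distrib]
    refine (Finset.sum_le_sum (g := fun _ => m + M) fun i _ => ?_).trans (by simp [mul_add])
    have h2 : 0 ≤ (l i - m) * (M - l i) * (l i)⁻¹ :=
      mul_nonneg (mul_nonneg (sub_nonneg.2 (hl i)) (sub_nonneg.2 (hu i)))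
        (inv_nonneg.2 (hpos i).le)
    have h3 : (l i - m) * (M - l i) * (l i)⁻¹ = m + M - (l i + m * M * (l i)⁻¹) := by
      have := (hpos i).ne'
      field_simp
      ring
    linarith
  have hS : 0 ≤ ∑ i, l i := Finset.sum_nonneg fun i _ => (hpos i).le
  have hT : 0 ≤ m * M * ∑ i, (l i)⁻¹ :=
    mul_nonneg (by positivity) (Finset.sum_nonneg fun i _ => (inv_pos.2 (hpos i)).le)
  have h4 := pow_le_pow_left₀ (add_nonneg hS hT) h1 2
  nlinarith [sq_nonneg ((∑ i, l i) - m * M * ∑ i, (l i)⁻¹)]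

/-- Polya–Szego (Kantorovich-type) trace inequality: for an `N × N` positive definite
Hermitian matrix `P` with smallest eigenvalue `λmin > 0` and largest eigenvalue `λmax`,
and condition number `κ = λmax / λmin`,
`tr(P) · tr(P⁻¹) ≤ (N²/4) (κ + 1/κ)²`. -/
theorem stmt10 (N : ℕ) (hN : 1 ≤ N) (P : Matrix (Fin N) (Fin N) ℂ)
    (hP : P.PosDef) (lmin lmax : ℝ) (hlmin : 0 < lmin)
    (hmin_le : ∀ i, lmin ≤ hP.1.eigenvalues i)
    (hle_max : ∀ i, hP.1.eigenvalues i ≤ lmax)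
    (hmin_mem : ∃ i, hP.1.eigenvalues i = lmin)
    (hmax_mem : ∃ i, hP.1.eigenvalues i = lmax) :
    P.trace.re * (P⁻¹).trace.re ≤
      ((N : ℝ) ^ 2 / 4) * (lmax / lmin + lmin / lmax) ^ 2 := by
  have hM : 0 < lmax := by
    obtain ⟨i, hi⟩ := hmin_mem
    exact hlmin.trans_le (hi ▸ hle_max i)
  have hS : P.trace.re = ∑ i, hP.1.eigenvalues i := by
    rw [hP.1.trace_eq_sum_eigenvalues]
    simp
  have hT : (P⁻¹).trace.re = ∑ i, (hP.1.eigenvalues i)⁻¹ := by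
    rw [trace_inv_eq_sum hP, Complex.re_sum]
    simp only [Complex.ofReal_re]
  rw [hS, hT]
  have hK := kantorovich_sum hP.1.eigenvalues hlmin hmin_le hle_max
  set X := (∑ i, hP.1.eigenvalues i) * ∑ i, (hP.1.eigenvalues i)⁻¹
  set t := lmax / lmin + lmin / lmax with ht
  have ht2 : t - 2 = (lmax - lmin) ^ 2 / (lmin * lmax) := by
    rw [ht]
    field_simp
    ring
  have ht_ge : 0 ≤ t - 2 := by
    rw [ht2]
    positivity
  have hX : X ≤ (N : ℝ) ^ 2 / 4 * (t + 2) := by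
    have e : (N : ℝ) ^ 2 / 4 * (t + 2) = (N : ℝ) ^ 2 * (lmin + lmax) ^ 2 / (4 * (lmin * lmax)) := by
      rw [ht]
      field_simp
      ring
    rw [e, le_div_iff₀ (by positivity)]
    linarith
  refine hX.trans (mul_le_mul_of_nonneg_left ?_ (by positivity))
  nlinarith
end
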